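/- arXiv:1702.01694 — 2 statements merged into one kernel-verified Lean document; each statement's English description precedes it below -/
import Mathlib

section
/- Assume k is an integral domain. Then for each i ∈ {1,2,3,4}, the ideal of the localization C_{x_i} generated by the three Jacobian minors J_{r,s} with r < s and r, s ∈ {1,2,3,4}\{i} is a prime ideal of C_{x_i}. -/
open MvPolynomial

/-- Index type for the coefficient indeterminates `U_{i,α}`, `i ∈ {1,2}`,
`α` an exponent vector in four variables with `|α| = d i`. -/
def CoefIdx (d : Fin 2 → ℕ) : Type :=
  Σ i : Fin 2, {α : Fin 4 →₀ ℕ // (α.sum fun _ e => e) = d i}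

/-- The universal ring of coefficients `A = k[U_{i,α}]`. -/
abbrev Aring (k : Type*) [CommRing k] (d : Fin 2 → ℕ) : Type _ :=
  MvPolynomial (CoefIdx d) k

/-- The polynomial ring `C = A[x₁,x₂,x₃,x₄]`. -/
abbrev Cring (k : Type*) [CommRing k] (d : Fin 2 → ℕ) : Type _ :=
  MvPolynomial (Fin 4) (Aring k d)

/-- The generic homogeneous polynomial `f_i = Σ_{|α| = d i} U_{i,α} x^α` of degree `d i`. -/
noncomputable def genF (k : Type*) [CommRing k] (d : Fin 2 → ℕ) (i : Fin 2) : Cring k d :=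
  ∑ α ∈ (Finset.finsuppAntidiag (Finset.univ : Finset (Fin 4)) (d i)).attach,
    monomial α.1 (X (⟨i, ⟨α.1, (Finset.mem_finsuppAntidiag'.mp α.2).1⟩⟩ : CoefIdx d))

/-- The 2-minors `J_{r,s} = ∂ᵣf₁·∂ₛf₂ − ∂ₛf₁·∂ᵣf₂` of the Jacobian matrix of `(f₁,f₂)`. -/
noncomputable def Jmin (k : Type*) [CommRing k] (d : Fin 2 → ℕ) (r s : Fin 4) : Cring k d :=
  pderiv r (genF k d 0) * pderiv s (genF k d 1) -
    pderiv s (genF k d 0) * pderiv r (genF k d 1)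

/-- The ideal `𝒟 = (f₁, f₂) + (J_{r,s} : r < s) ⊂ C`. -/
noncomputable def Dideal (k : Type*) [CommRing k] (d : Fin 2 → ℕ) : Ideal (Cring k d) :=
  Ideal.span ({genF k d 0, genF k d 1} ∪ {p | ∃ r s : Fin 4, r < s ∧ p = Jmin k d r s})

/-!
The derivative `∂ᵣ f_j`, for `r ≠ i`, is `U * x_i ^ (d_j - 1)` plus a polynomial free of `U` and of
the corresponding coefficients for all other pairs `(j, r)`, where `U` is the coefficient of
`x_i ^ (d_j - 1) * x_r` in `f_j`. Once `x_i` is invertible, an affine change of coordinates thus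
turns these derivatives into independent variables over a domain, and the Jacobian minors into the
`2 × 2` minors of a generic matrix. Modulo the minors, a monomial in the entries of a generic matrix
only depends on the row and column sums of its table of exponents, so that the minors generate the
kernel of the Segre parametrization `Z_{ar} ↦ X_a * Y_r`, a homomorphism to a domain.
-/

open Function (Injective FactorsThrough)

section TwoMinors

variable {ι σ R S : Type*} [CommRing R] [CommRing S]

/-- The ideal generated by the `2 × 2` minors of a matrix. Rows and columns may be listed in any
order and may repeat, so that no order on the index types is involved. -/
def twoMinorIdeal (M : Matrix ι σ R) : Ideal R :=
  Ideal.span {p | ∃ a b r s, p = M a r * M b s - M a s * M b r}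

lemma minor_mem_twoMinorIdeal (M : Matrix ι σ R) (a b : ι) (r s : σ) :
    M a r * M b s - M a s * M b r ∈ twoMinorIdeal M :=
  Ideal.subset_span ⟨a, b, r, s, rfl⟩

lemma twoMinorIdeal_le_iff {M : Matrix ι σ R} {I : Ideal R} :
    twoMinorIdeal M ≤ I ↔ ∀ a b r s, M a r * M b s - M a s * M b r ∈ I := by
  refine Ideal.span_le.trans ⟨fun h a b r s ↦ h ⟨a, b, r, s, rfl⟩, fun h ↦ ?_⟩
  rintro _ ⟨a, b, r, s, rfl⟩
  exact h a b r s

lemma map_twoMinorIdeal (f : R →+* S) (M : Matrix ι σ R) :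
    (twoMinorIdeal M).map f = twoMinorIdeal (M.map f) := by
  refine le_antisymm (Ideal.map_le_iff_le_comap.mpr (twoMinorIdeal_le_iff.mpr ?_))
    (twoMinorIdeal_le_iff.mpr ?_)
  · intro a b r s
    simpa using minor_mem_twoMinorIdeal (M.map f) a b r s
  · intro a b r s
    simpa using Ideal.mem_map_of_mem f (minor_mem_twoMinorIdeal M a b r s)

lemma twoMinorIdeal_isPrime_of_map_ringEquiv (e : R ≃+* S) {M : Matrix ι σ R}
    (h : (twoMinorIdeal (M.map e)).IsPrime) : (twoMinorIdeal M).IsPrime := by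
  have hM : (twoMinorIdeal M).map (e : R →+* S) = twoMinorIdeal (M.map e) := map_twoMinorIdeal _ M
  rw [← Ideal.comap_map_of_bijective (e : R →+* S) e.bijective (I := twoMinorIdeal M), hM]
  exact h.comap _

lemma twoMinorIdeal_fin_two [LinearOrder σ] (M : Matrix (Fin 2) σ R) :
    twoMinorIdeal M = Ideal.span {p | ∃ r s, r < s ∧ p = M 0 r * M 1 s - M 0 s * M 1 r} := by
  set I := Ideal.span {p | ∃ r s, r < s ∧ p = M 0 r * M 1 s - M 0 s * M 1 r}
  have mem_of_lt {r s : σ} (hrs : r < s) : M 0 r * M 1 s - M 0 s * M 1 r ∈ I :=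
    Ideal.subset_span ⟨r, s, hrs, rfl⟩
  have mem (r s : σ) : M 0 r * M 1 s - M 0 s * M 1 r ∈ I := by
    rcases lt_trichotomy r s with hrs | rfl | hsr
    · exact mem_of_lt hrs
    · simp
    · simpa using I.neg_mem (mem_of_lt hsr)
  refine le_antisymm (twoMinorIdeal_le_iff.mpr fun a b r s ↦ ?_) (Ideal.span_le.mpr ?_)
  · fin_cases a <;> fin_cases b
    · simp [mul_comm]
    · exact mem r s
    · simpa [mul_comm] using mem s r
    · simp [mul_comm]
  · rintro _ ⟨r, s, -, rfl⟩
    exact minor_mem_twoMinorIdeal M 0 1 r s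

end TwoMinors

section Segre

variable {ι σ : Type*}

lemma multiset_prod_map_eq_of_map_fst_eq_of_map_snd_eq {N : Type*} [CommMonoid N] {z : ι × σ → N}
    (hz : ∀ a b r s, z (a, r) * z (b, s) = z (a, s) * z (b, r)) {m m' : Multiset (ι × σ)}
    (hrow : m.map Prod.fst = m'.map Prod.fst) (hcol : m.map Prod.snd = m'.map Prod.snd) :
    (m.map z).prod = (m'.map z).prod := by
  induction m using Multiset.induction_on generalizing m' with
  | empty => rw [Multiset.map_eq_zero.mp hrow.symm]
  | cons p m ih =>
    obtain ⟨a, r⟩ := p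
    obtain ⟨s, has⟩ : ∃ s, (a, s) ∈ m' := by
      have ha : a ∈ m'.map Prod.fst := by simp [← hrow]
      simpa using ha
    obtain ⟨m', rfl⟩ := Multiset.exists_cons_of_mem has
    obtain ⟨b, hbr⟩ : ∃ b, (b, r) ∈ (a, s) ::ₘ m' := by
      have hr : r ∈ ((a, s) ::ₘ m').map Prod.snd := by simp [← hcol]
      simpa only [Multiset.mem_map, Prod.exists, exists_eq_right] using hr
    rcases Multiset.mem_cons.mp hbr with hba | hbr
    · obtain ⟨rfl, rfl⟩ := Prod.mk.inj hba
      simp [ih (by simpa using hrow) (by simpa using hcol)]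
    · obtain ⟨m', rfl⟩ := Multiset.exists_cons_of_mem hbr
      -- The relation `hz` trades the cells `(a, s)`, `(b, r)` for `(a, r)`, `(b, s)`.
      have hm : (m.map z).prod = (((b, s) ::ₘ m').map z).prod := by
        refine ih (by simpa using hrow) ?_
        simpa [Multiset.cons_swap s r] using hcol
      simp [hm, ← mul_assoc, hz a b r s]

/-- The exponent map of the Segre parametrization, sending a table of exponents to its row sums
(on `ι`) and its column sums (on `σ`). -/
noncomputable def segreExponent (ι σ : Type*) : (ι × σ →₀ ℕ) →+ (ι ⊕ σ →₀ ℕ) :=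
  Finsupp.sumFinsuppAddEquivProdFinsupp.symm.toAddMonoidHom.comp
    ((Finsupp.mapDomain.addMonoidHom Prod.fst).prod (Finsupp.mapDomain.addMonoidHom Prod.snd))

lemma segreExponent_single (a : ι) (r : σ) (n : ℕ) :
    segreExponent ι σ (.single (a, r) n) = .single (.inl a) n + .single (.inr r) n := by
  classical
  ext (b | s) <;> simp [segreExponent, Finsupp.single_apply]

lemma segreExponent_eq_iff {m m' : ι × σ →₀ ℕ} :
    segreExponent ι σ m = segreExponent ι σ m' ↔
      m.mapDomain Prod.fst = m'.mapDomain Prod.fst ∧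
        m.mapDomain Prod.snd = m'.mapDomain Prod.snd :=
  Finsupp.sumFinsuppAddEquivProdFinsupp.symm.injective.eq_iff.trans Prod.mk_inj

lemma prod_pow_eq_of_segreExponent_eq {N : Type*} [CommMonoid N] {z : ι × σ → N}
    (hz : ∀ a b r s, z (a, r) * z (b, s) = z (a, s) * z (b, r)) {m m' : ι × σ →₀ ℕ}
    (h : segreExponent ι σ m = segreExponent ι σ m') :
    m.prod (fun p n ↦ z p ^ n) = m'.prod fun p n ↦ z p ^ n := by
  obtain ⟨hrow, hcol⟩ := segreExponent_eq_iff.mp h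
  have prod_eq (m : ι × σ →₀ ℕ) : m.prod (fun p n ↦ z p ^ n) = (m.toMultiset.map z).prod := by
    rw [Finsupp.toMultiset_map, Finsupp.prod_toMultiset, Finsupp.prod_mapDomain_index (by simp)]
    simp [pow_add]
  rw [prod_eq, prod_eq]
  refine multiset_prod_map_eq_of_map_fst_eq_of_map_snd_eq hz ?_ ?_
  · rw [Finsupp.toMultiset_map, Finsupp.toMultiset_map, hrow]
  · rw [Finsupp.toMultiset_map, Finsupp.toMultiset_map, hcol]

variable {B : Type*} [CommRing B]

/-- The Segre parametrization, the algebra map sending the generic matrix to the rank one matrix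
with entries `X (inl a) * X (inr r)`. -/
noncomputable def segreHom (ι σ B : Type*) [CommRing B] :
    MvPolynomial (ι × σ) B →ₐ[B] MvPolynomial (ι ⊕ σ) B :=
  aeval fun p ↦ X (.inl p.1) * X (.inr p.2)

lemma segreHom_monomial (m : ι × σ →₀ ℕ) :
    segreHom ι σ B (monomial m 1) = monomial (segreExponent ι σ m) 1 := by
  induction m using Finsupp.induction_linear with
  | zero => simp
  | add m m' hm hm' =>
    rw [← one_mul (1 : B), ← monomial_mul, map_mul, hm, hm', monomial_mul, map_add]
  | single p n =>
    obtain ⟨a, r⟩ := p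
    rw [segreHom, aeval_monomial, Finsupp.prod_single_index (by simp)]
    simp [segreExponent_single, mul_pow, X_pow_eq_monomial, monomial_mul]

lemma ker_le_ker_of_map_basis {R V W Q M N : Type*} [CommSemiring R] [AddCommMonoid V]
    [AddCommMonoid W] [AddCommMonoid Q] [Module R V] [Module R W] [Module R Q]
    (b : Module.Basis M R V) (b' : Module.Basis N R W) {f : V →ₗ[R] W} {q : V →ₗ[R] Q} {φ : M → N}
    (hf : ∀ m, f (b m) = b' (φ m)) (hq : FactorsThrough (q ∘ b) φ) :
    LinearMap.ker f ≤ LinearMap.ker q := by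
  let s : W →ₗ[R] Q := b'.constr R (Function.extend φ (q ∘ b) 0)
  have hs : q = s ∘ₗ f := b.ext fun m ↦ by simp [s, hf, hq.extend_apply]
  rw [hs]
  exact LinearMap.ker_le_ker_comp f s

lemma ker_segreHom :
    RingHom.ker (segreHom ι σ B) = twoMinorIdeal (Matrix.mvPolynomialX ι σ B) := by
  set I := twoMinorIdeal (Matrix.mvPolynomialX ι σ B)
  apply le_antisymm
  · have mk_X_mul_mk_X (a b : ι) (r s : σ) :
        Ideal.Quotient.mk I (X (a, r)) * Ideal.Quotient.mk I (X (b, s)) =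
          Ideal.Quotient.mk I (X (a, s)) * Ideal.Quotient.mk I (X (b, r)) := by
      simpa using Ideal.Quotient.eq.mpr
        (minor_mem_twoMinorIdeal (Matrix.mvPolynomialX ι σ B) a b r s)
    have mk_monomial (m : ι × σ →₀ ℕ) : Ideal.Quotient.mk I (monomial m 1) =
        m.prod fun p n ↦ Ideal.Quotient.mk I (X p) ^ n := by
      simp [monomial_eq, map_finsuppProd]
    have ker_le := ker_le_ker_of_map_basis (basisMonomials (ι × σ) B) (basisMonomials (ι ⊕ σ) B)
      (f := (segreHom ι σ B).toLinearMap) (q := (Ideal.Quotient.mkₐ B I).toLinearMap)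
      (φ := segreExponent ι σ) (by simp [segreHom_monomial]) fun m m' h ↦ by
        simpa [mk_monomial] using prod_pow_eq_of_segreExponent_eq mk_X_mul_mk_X h
    exact fun p hp ↦ Ideal.Quotient.eq_zero_iff_mem.mp (ker_le hp)
  · refine twoMinorIdeal_le_iff.mpr fun a b r s ↦ ?_
    simp only [Matrix.mvPolynomialX_apply, RingHom.mem_ker, segreHom, map_sub, map_mul, aeval_X]
    ring

theorem twoMinorIdeal_mvPolynomialX_isPrime [IsDomain B] :
    (twoMinorIdeal (Matrix.mvPolynomialX ι σ B)).IsPrime := by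
  rw [← ker_segreHom]
  exact RingHom.ker_isPrime _

end Segre

section Affine

variable {ι σ V B : Type*} [CommRing B]

/-- The change of coordinates `X v ↦ X v * u v + g v` of a polynomial ring, for units `u v` and
constants `g v`. -/
noncomputable def affineCoordinateChange (u : V → Bˣ) (g : V → B) :
    MvPolynomial V B ≃ₐ[B] MvPolynomial V B :=
  AlgEquiv.ofAlgHom (aeval fun v ↦ X v * C (u v : B) + C (g v))
    (aeval fun v ↦ (X v - C (g v)) * C ((u v)⁻¹ : Bˣ).val)
    (by ext1 v; simp [mul_assoc, ← C_mul])
    (by ext1 v; simp [mul_assoc, ← C_mul])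

lemma affineCoordinateChange_X (u : V → Bˣ) (g : V → B) (v : V) :
    affineCoordinateChange u g (X v) = X v * C (u v : B) + C (g v) := by
  simp [affineCoordinateChange]

lemma twoMinorIdeal_isPrime_of_affine [IsDomain B] (u : ι × σ → Bˣ) (g : ι × σ → B) :
    (twoMinorIdeal (Matrix.of fun a r ↦ X (a, r) * C (u (a, r) : B) + C (g (a, r)))).IsPrime := by
  apply twoMinorIdeal_isPrime_of_map_ringEquiv (affineCoordinateChange u g).symm.toRingEquiv
  convert twoMinorIdeal_mvPolynomialX_isPrime (ι := ι) (σ := σ) (B := B) using 2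
  ext1 a r
  exact (affineCoordinateChange u g).symm_apply_eq.mpr (affineCoordinateChange_X u g (a, r)).symm

end Affine

section Away

variable {ι σ V R B : Type*} [CommRing R] [CommRing B]

lemma exists_ringEquiv_mvPolynomial_away (e : R ≃+* MvPolynomial V B) {x : B} {y : R}
    (hy : e y = C x) (L : Type*) [CommRing L] [Algebra R L] [IsLocalization.Away y L] :
    ∃ E : L ≃+* MvPolynomial V (Localization.Away x),
      ∀ p, E (algebraMap R L p) = map (algebraMap B (Localization.Away x)) (e p) := by
  let : Algebra (MvPolynomial V B) (MvPolynomial V (Localization.Away x)) := algebraMvPolynomial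
  have powers_map : (Submonoid.powers y).map e.toMonoidHom = (Submonoid.powers x).map C := by
    simp [Submonoid.map_powers, hy]
  exact ⟨IsLocalization.ringEquivOfRingEquiv L (MvPolynomial V (Localization.Away x)) e powers_map,
    fun p ↦ IsLocalization.ringEquivOfRingEquiv_eq _ p⟩

theorem twoMinorIdeal_away_isPrime [IsDomain B] (e : R ≃+* MvPolynomial (ι × σ) B)
    {x : B} (hx : x ≠ 0) {y : R} (hy : e y = C x) (L : Type*) [CommRing L] [Algebra R L]
    [IsLocalization.Away y L] {M : Matrix ι σ R} (n : ι × σ → ℕ) (g : ι × σ → B)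
    (hM : ∀ a r, e (M a r) = X (a, r) * C (x ^ n (a, r)) + C (g (a, r))) :
    (twoMinorIdeal (M.map (algebraMap R L))).IsPrime := by
  obtain ⟨E, hE⟩ := exists_ringEquiv_mvPolynomial_away e hy L
  have : IsDomain (Localization.Away x) :=
    IsLocalization.isDomain_localization (powers_le_nonZeroDivisors_of_noZeroDivisors hx)
  have isUnit_x : IsUnit (algebraMap B (Localization.Away x) x) :=
    IsLocalization.Away.algebraMap_isUnit x
  apply twoMinorIdeal_isPrime_of_map_ringEquiv E
  convert twoMinorIdeal_isPrime_of_affine (fun p ↦ isUnit_x.unit ^ n p)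
    fun p ↦ algebraMap B (Localization.Away x) (g p) using 2
  ext1 a r
  simp [hE, hM]

end Away

section SeparateVariables

variable {V τ : Type*} (k : Type*) [CommRing k]

/-- The ring `k[τ][σ]`, seen as a polynomial ring in the variables from the range of an injective
family `v : V → τ`, over the ring of those polynomials in which these variables do not occur. -/
noncomputable def separateVariables (σ : Type*) {v : V → τ} (hv : Injective v) :
    MvPolynomial σ (MvPolynomial τ k) ≃+*
      MvPolynomial V (MvPolynomial σ (MvPolynomial ↥(Set.range v)ᶜ k)) :=
  open Classical in
  let split : τ ≃ V ⊕ ↥(Set.range v)ᶜ :=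
    (((Equiv.ofInjective v hv).sumCongr (.refl _)).trans (Equiv.Set.sumCompl _)).symm
  (mapAlgEquiv σ ((renameEquiv k split).trans (sumAlgEquiv k V _))).toRingEquiv.trans
    (commAlgEquiv _ σ V).toRingEquiv

variable {σ : Type*} {v : V → τ} (hv : Injective v)

lemma separateVariables_X (s : σ) : separateVariables k σ hv (X s) = C (X s) := by
  simp [separateVariables]

lemma separateVariables_C_X (p : V) : separateVariables k σ hv (C (X (v p))) = X p := by
  classical
  simp [separateVariables, Equiv.Set.sumCompl_symm_apply_of_mem (Set.mem_range_self p)]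

lemma separateVariables_map_rename (q : MvPolynomial σ (MvPolynomial ↥(Set.range v)ᶜ k)) :
    separateVariables k σ hv (map (rename Subtype.val).toRingHom q) = C q := by
  classical
  induction q using MvPolynomial.induction_on with
  | C a =>
    induction a using MvPolynomial.induction_on with
    | C c => simp [separateVariables]
    | add a b ha hb => simp_all
    | mul_X a c ha => simp_all [separateVariables]
  | add p q hp hq => simp only [map_add, hp, hq]
  | mul_X p s hp => simp only [map_mul, hp, map_X, separateVariables_X]

end SeparateVariables

section GenericForm

variable {ι σ : Type*}

/-- The index type of the coefficient indeterminates of generic forms of degrees `d j`: `⟨j, α⟩`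
stands for the coefficient of `x ^ α` in the `j`-th form. -/
def FormIndex (σ : Type*) (d : ι → ℕ) : Type _ :=
  Σ j : ι, {α : σ →₀ ℕ // (α.sum fun _ e ↦ e) = d j}

/-- The index of the coefficient of `x_i ^ (d j - 1) * x_r` in the `j`-th generic form. -/
noncomputable def pivotIndex {d : ι → ℕ} (hd : ∀ j, 0 < d j) (i : σ) (p : ι × {r : σ // r ≠ i}) :
    FormIndex σ d :=
  ⟨p.1, .single i (d p.1 - 1) + .single p.2.1 1, by
    rw [Finsupp.sum_add_index' (fun _ ↦ rfl) (fun _ _ _ ↦ rfl), Finsupp.sum_single_index rfl,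
      Finsupp.sum_single_index rfl, Nat.sub_add_cancel (hd p.1)]⟩

variable {d : ι → ℕ} (hd : ∀ j, 0 < d j) {i : σ}

lemma pivotIndex_injective : Injective (pivotIndex hd i) := by
  rintro ⟨a, r⟩ ⟨b, s⟩ h
  obtain rfl : a = b := congrArg Sigma.fst h
  have exponent_eq := congrArg Subtype.val (eq_of_heq (Sigma.mk.inj h).2)
  have r_eq_s := (Finsupp.single_left_inj one_ne_zero).mp (add_left_cancel exponent_eq)
  exact congrArg (Prod.mk a) (Subtype.ext r_eq_s)

lemma notMem_range_pivotIndex {c : FormIndex σ d} {β : σ →₀ ℕ} {r : σ} (hr : r ≠ i)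
    (hc : c.2.1 = β + .single r 1) (hβ : β ≠ .single i (d c.1 - 1)) :
    c ∉ Set.range (pivotIndex hd i) := by
  classical
  rintro ⟨⟨j, s⟩, rfl⟩
  change Finsupp.single i (d j - 1) + .single s.1 1 = β + .single r 1 at hc
  by_cases hs : s.1 = r
  · rw [hs] at hc
    exact hβ (add_right_cancel hc).symm
  · simpa [hr.symm, hs] using DFunLike.congr_fun hc r

variable [Fintype σ] [DecidableEq σ] (k : Type*) [CommRing k]

/-- The `j`-th of the generic forms of degrees `d j` in the variables `σ`, over the polynomial ring
in the coefficient indeterminates of all these forms. -/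
noncomputable def genericForm (d : ι → ℕ) (j : ι) :
    MvPolynomial σ (MvPolynomial (FormIndex σ d) k) :=
  ∑ α ∈ (Finset.finsuppAntidiag (Finset.univ : Finset σ) (d j)).attach,
    monomial α.1 (X ⟨j, α.1, (Finset.mem_finsuppAntidiag'.mp α.2).1⟩)

lemma coeff_genericForm (c : FormIndex σ d) : coeff c.2.1 (genericForm k d c.1) = X c := by
  have hc : c.2.1 ∈ Finset.finsuppAntidiag (Finset.univ : Finset σ) (d c.1) :=
    Finset.mem_finsuppAntidiag'.mpr ⟨c.2.2, Finset.subset_univ _⟩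
  rw [genericForm, coeff_sum, Finset.sum_eq_single_of_mem ⟨c.2.1, hc⟩ (Finset.mem_attach _ _)]
  · rw [coeff_monomial, if_pos rfl]; rfl
  · rintro α - hα
    rw [coeff_monomial, if_neg fun h ↦ hα (Subtype.ext h)]

lemma coeff_genericForm_of_ne {j : ι} {α : σ →₀ ℕ} (hα : (α.sum fun _ e ↦ e) ≠ d j) :
    coeff α (genericForm k d j) = 0 := by
  rw [genericForm, coeff_sum]
  refine Finset.sum_eq_zero fun β _ ↦ ?_
  rw [coeff_monomial, if_neg]
  rintro rfl
  exact hα (Finset.mem_finsuppAntidiag'.mp β.2).1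

lemma coeff_pderiv_genericForm_sub_pivot_mem_range_rename (j : ι) (r : {r : σ // r ≠ i})
    (β : σ →₀ ℕ) :
    coeff β (pderiv r.1 (genericForm k d j) - C (X (pivotIndex hd i (j, r))) * X i ^ (d j - 1)) ∈
      (rename (R := k) ((↑) : ↥(Set.range (pivotIndex hd i))ᶜ → FormIndex σ d)).range := by
  rw [coeff_sub, coeff_pderiv, coeff_C_mul, coeff_X_pow]
  by_cases hβ : .single i (d j - 1) = β
  · have coeff_pivot : coeff (.single i (d j - 1) + .single r.1 1) (genericForm k d j) =
        X (pivotIndex hd i (j, r)) := coeff_genericForm k (pivotIndex hd i (j, r))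
    subst hβ
    rw [coeff_pivot, if_pos rfl]
    simp [r.2.symm]
  · rw [if_neg hβ, mul_zero, sub_zero]
    refine mul_mem ?_ (add_mem (natCast_mem _ _) (one_mem _))
    by_cases hdeg : ((β + .single r.1 1).sum fun _ e ↦ e) = d j
    · let c : FormIndex σ d := ⟨j, β + .single r.1 1, hdeg⟩
      have hc : c ∉ Set.range (pivotIndex hd i) := notMem_range_pivotIndex hd r.2 rfl (Ne.symm hβ)
      exact ⟨X ⟨c, hc⟩, by simpa using (coeff_genericForm k c).symm⟩
    · rw [coeff_genericForm_of_ne k hdeg]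
      exact zero_mem _

lemma exists_pderiv_genericForm_eq (j : ι) (r : {r : σ // r ≠ i}) :
    ∃ g : MvPolynomial σ (MvPolynomial ↥(Set.range (pivotIndex hd i))ᶜ k),
      pderiv r.1 (genericForm k d j) = C (X (pivotIndex hd i (j, r))) * X i ^ (d j - 1) +
        map (rename Subtype.val).toRingHom g := by
  set h := pderiv r.1 (genericForm k d j) - C (X (pivotIndex hd i (j, r))) * X i ^ (d j - 1)
    with h_def
  obtain ⟨g, hg⟩ : h ∈ Set.range (map (rename Subtype.val).toRingHom) := by
    refine mem_range_map_iff_coeffs_subset.mpr fun a ha ↦ ?_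
    obtain ⟨β, -, rfl⟩ := mem_coeffs_iff.mp ha
    exact coeff_pderiv_genericForm_sub_pivot_mem_range_rename hd k j r β
  exact ⟨g, by rw [hg, h_def, add_sub_cancel]⟩

end GenericForm

theorem Jmin_span_isPrime_general {ι σ : Type*} [Fintype σ] [DecidableEq σ] (k : Type*)
    [CommRing k] [IsDomain k] (d : ι → ℕ) (hd : ∀ j, 0 < d j) (i : σ) :
    (twoMinorIdeal (Matrix.of fun (j : ι) (r : {r : σ // r ≠ i}) ↦
      algebraMap _ (Localization.Away (X i : MvPolynomial σ (MvPolynomial (FormIndex σ d) k)))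
        (pderiv r.1 (genericForm k d j)))).IsPrime := by
  choose g hg using fun p : ι × {r : σ // r ≠ i} ↦ exists_pderiv_genericForm_eq hd k p.1 p.2
  let M := Matrix.of fun (j : ι) (r : {r : σ // r ≠ i}) ↦ pderiv r.1 (genericForm k d j)
  refine twoMinorIdeal_away_isPrime (separateVariables k σ (pivotIndex_injective hd)) (X_ne_zero i)
    (separateVariables_X k _ i) _ (M := M) (fun p ↦ d p.1 - 1) g fun j r ↦ ?_
  rw [show M j r = _ from hg (j, r), map_add, map_mul, map_pow, separateVariables_X,
    separateVariables_C_X, separateVariables_map_rename, C_pow]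

lemma span_algebraMap_Jmin_eq_twoMinorIdeal {k : Type*} [CommRing k] {d : Fin 2 → ℕ} (i : Fin 4)
    (L : Type*) [CommRing L] [Algebra (Cring k d) L] :
    Ideal.span (algebraMap (Cring k d) L ''
        {p | ∃ r s : Fin 4, r < s ∧ r ≠ i ∧ s ≠ i ∧ p = Jmin k d r s}) =
      twoMinorIdeal (Matrix.of fun j (r : {r : Fin 4 // r ≠ i}) ↦
        algebraMap (Cring k d) L (pderiv r.1 (genF k d j))) := by
  rw [twoMinorIdeal_fin_two]
  congr 1
  ext p
  constructor
  · rintro ⟨_, ⟨r, s, hrs, hr, hs, rfl⟩, rfl⟩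
    exact ⟨⟨r, hr⟩, ⟨s, hs⟩, hrs, by simp [Jmin]⟩
  · rintro ⟨r, s, hrs, rfl⟩
    exact ⟨_, ⟨r.1, s.1, hrs, r.2, s.2, rfl⟩, by simp [Jmin]⟩

/-- **Lemma.** If `k` is a domain then for each `i`, the ideal of the localization
`C_{x_i}` generated by the three Jacobian minors `J_{r,s}` with `r < s` and
`r, s ≠ i` is a prime ideal. -/
theorem Jmin_span_isPrime (k : Type*) [CommRing k] [IsDomain k] (d : Fin 2 → ℕ)
    (hd : ∀ i, 0 < d i) (i : Fin 4) :
    (Ideal.span ((algebraMap (Cring k d) (Localization.Away (X i : Cring k d))) ''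
      {p | ∃ r s : Fin 4, r < s ∧ r ≠ i ∧ s ≠ i ∧ p = Jmin k d r s})).IsPrime := by
  rw [span_algebraMap_Jmin_eq_twoMinorIdeal]
  exact Jmin_span_isPrime_general k d hd i
end

section
/- Assume k is an integral domain. Then for each i ∈ {1,2,3,4}, the ideal of inertia forms satisfies T_𝔪(𝒟) = {p ∈ C : x_i^ν · p ∈ 𝒟 for some ν ∈ ℕ}; equivalently, T_𝔪(𝒟) is the kernel of the canonical map C → B_{x_i}. -/
set_option maxSynthPendingDepth 3

open MvPolynomial

/-- The maximal graded ideal `𝔪 = (x₁,x₂,x₃,x₄) ⊂ C`. -/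
noncomputable def mIdeal (k : Type*) [CommRing k] (d : Fin 2 → ℕ) : Ideal (Cring k d) :=
  Ideal.span (Set.range (X : Fin 4 → Cring k d))

/-!
The ideal `𝒟` is stable under linear changes of coordinates performed on the forms and on the point
simultaneously, by the chain rule for Jacobian minors. Let `g : C → S` be a `k`-algebra map that
kills `𝒟` and sends `x_i` to a nonzerodivisor. The change of coordinates `x_j ↦ x_j + t x_i`
produces a map `C → S[t]` that still kills `𝒟`, specializes to `g` at `t = 0`, and sends `x_j` to
the nonzerodivisor `g x_j + t g x_i`. If `x_j ^ ν * p ∈ 𝒟`, this map therefore kills `p`, and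
hence so does `g`. For `S = B_{x_i}` the conclusion is that some power of `x_i` multiplies `p`
into `𝒟`.
-/

section General

variable {R ι : Type*} [CommRing R]

lemma exists_span_pow_mul_mem_iff [Finite ι] (x : ι → R) (I : Ideal R) (p : R) :
    (∃ ν : ℕ, ∀ q ∈ Ideal.span (Set.range x) ^ ν, q * p ∈ I) ↔
      ∀ j, ∃ ν : ℕ, x j ^ ν * p ∈ I := by
  refine ⟨fun ⟨ν, h⟩ j =>
    ⟨ν, h _ (Ideal.pow_mem_pow (Ideal.subset_span (Set.mem_range_self j)) ν)⟩, fun h => ?_⟩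
  have hle : Ideal.span (Set.range x) ≤ (I.colon {p}).radical := by
    rw [Ideal.span_le, Set.range_subset_iff]
    exact fun j => (h j).imp fun ν hν => Submodule.mem_colon_singleton.mpr hν
  obtain ⟨ν, hν⟩ := Ideal.exists_pow_le_of_le_radical_of_fg hle
    (Submodule.fg_span (Set.finite_range x))
  exact ⟨ν, fun q hq => Submodule.mem_colon_singleton.mp (hν hq)⟩

lemma algebraMap_away_mk_eq_zero_iff (I : Ideal R) (x p : R) :
    algebraMap (R ⧸ I) (Localization.Away (Ideal.Quotient.mk I x)) (Ideal.Quotient.mk I p) = 0 ↔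
      ∃ ν : ℕ, x ^ ν * p ∈ I := by
  simp [IsLocalization.map_eq_zero_iff (Submonoid.powers (Ideal.Quotient.mk I x)),
    Submonoid.mem_powers_iff, ← map_pow, ← map_mul, Ideal.Quotient.eq_zero_iff_mem]

lemma map_transvection {S : Type*} [CommRing S] [DecidableEq ι] (f : R →+* S) (i j : ι) (c : R) :
    (Matrix.transvection i j c).map f = Matrix.transvection i j (f c) := by
  rw [Matrix.transvection, Matrix.map_add f (map_add f), Matrix.map_one f (map_zero f) (map_one f),
    Matrix.map_single, Matrix.transvection]

end General

section Substitution

variable {R σ τ : Type*} [CommSemiring R]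

lemma eval_bind₁ (f : σ → MvPolynomial τ R) (y : τ → R) (p : MvPolynomial σ R) :
    eval y (bind₁ f p) = eval (fun a => eval y (f a)) p :=
  eval₂Hom_bind₁ _ _ _ _

lemma pderiv_bind₁ [Fintype σ] (f : σ → MvPolynomial τ R) (p : MvPolynomial σ R) (r : τ) :
    pderiv r (bind₁ f p) = ∑ a, bind₁ f (pderiv a p) * pderiv r (f a) := by
  classical
  induction p using MvPolynomial.induction_on with
  | C c => simp
  | add p q hp hq => simp only [map_add, hp, hq, add_mul, Finset.sum_add_distrib]
  | mul_X p a hp =>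
    simp [pderiv_X, hp, Pi.single_apply, add_mul, Finset.sum_add_distrib, Finset.mul_sum,
      apply_ite (bind₁ f), mul_assoc]

end Substitution

section JacobianMinor

variable {R σ τ : Type*} [CommRing R]

/-- The `2 × 2` minor of the Jacobian matrix of `(p, q)` in the columns `r` and `s`, so that
`Jmin k d` is definitionally `jacobianMinor (genF k d 0) (genF k d 1)`. -/
noncomputable def jacobianMinor (p q : MvPolynomial τ R) (r s : τ) : MvPolynomial τ R :=
  pderiv r p * pderiv s q - pderiv s p * pderiv r q

lemma map_jacobianMinor {S : Type*} [CommRing S] (φ : R →+* S) (p q : MvPolynomial τ R)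
    (r s : τ) :
    map φ (jacobianMinor p q r s) = jacobianMinor (map φ p) (map φ q) r s := by
  simp only [jacobianMinor, map_sub, map_mul, pderiv_map]

lemma jacobianMinor_bind₁ [Fintype σ] (f : σ → MvPolynomial τ R) (p q : MvPolynomial σ R)
    (r s : τ) :
    jacobianMinor (bind₁ f p) (bind₁ f q) r s =
      ∑ a, ∑ b, bind₁ f (jacobianMinor p q a b) * (pderiv r (f a) * pderiv s (f b)) := by
  simp only [jacobianMinor, pderiv_bind₁, map_sub, map_mul]
  rw [mul_comm (∑ a, _ * pderiv s (f a)), Finset.sum_mul_sum, Finset.sum_mul_sum]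
  simp_rw [← Finset.sum_sub_distrib]
  exact Finset.sum_congr rfl fun a _ => Finset.sum_congr rfl fun b _ => by ring

end JacobianMinor

section GenericForms

variable {k : Type*} [CommRing k] {d : Fin 2 → ℕ}

lemma isHomogeneous_genF (a : Fin 2) : (genF k d a).IsHomogeneous (d a) :=
  IsHomogeneous.sum _ _ _ fun α _ =>
    isHomogeneous_monomial _ (Finset.mem_finsuppAntidiag'.mp α.2).1

lemma coeff_genF (b : CoefIdx d) : coeff b.2.1 (genF k d b.1) = X b := by
  classical
  obtain ⟨a, α, hα⟩ := b
  rw [genF, coeff_sum, Finset.sum_eq_single ⟨α, Finset.mem_finsuppAntidiag'.mpr ⟨hα, by simp⟩⟩]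
  · simp
  · exact fun β _ hβ => (coeff_monomial _ _ _).trans (if_neg fun h => hβ (Subtype.ext h))
  · simp

lemma Jmin_mem_Dideal (r s : Fin 4) : Jmin k d r s ∈ Dideal k d := by
  have hlt {r s : Fin 4} (h : r < s) : Jmin k d r s ∈ Dideal k d :=
    Ideal.subset_span (Or.inr ⟨r, s, h, rfl⟩)
  rcases lt_trichotomy r s with h | rfl | h
  · exact hlt h
  · simp [Jmin]
  · rw [show Jmin k d r s = -Jmin k d s r by simp [Jmin]]
    exact neg_mem (hlt h)

lemma Dideal_le_iff {I : Ideal (Cring k d)} :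
    Dideal k d ≤ I ↔ (∀ a, genF k d a ∈ I) ∧ ∀ r s, Jmin k d r s ∈ I := by
  refine ⟨fun h => ⟨fun a => h (Ideal.subset_span (Or.inl ?_)), fun r s => h (Jmin_mem_Dideal r s)⟩,
    fun ⟨hF, hJ⟩ => ?_⟩
  · fin_cases a <;> simp
  · rw [Dideal, Ideal.span_le]
    rintro _ ((rfl | rfl) | ⟨r, s, -, rfl⟩)
    exacts [hF 0, hF 1, hJ r s]

end GenericForms

section Points

variable {k S T : Type*} [CommRing k] [CommRing S] [CommRing T] [Algebra k S] [Algebra k T]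
  {d : Fin 2 → ℕ}

/-- The specialization of `genF k d a` to a form over `S` along the coefficients of an `S`-valued
point `g` of `Spec C`. -/
noncomputable def formOf (g : Cring k d →ₐ[k] S) (a : Fin 2) : MvPolynomial (Fin 4) S :=
  map (g.toRingHom.comp C) (genF k d a)

/-- The `S`-valued point of `Spec C` given by a pair of forms `h` over `S` and a point `x ∈ S⁴`.
Only the coefficients of `h a` in degree `d a` matter. -/
noncomputable def pointOf (d : Fin 2 → ℕ) (h : Fin 2 → MvPolynomial (Fin 4) S) (x : Fin 4 → S) :
    Cring k d →ₐ[k] S :=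
  aevalTower (aeval fun b => coeff b.2.1 (h b.1)) x

lemma isHomogeneous_formOf (g : Cring k d →ₐ[k] S) (a : Fin 2) :
    (formOf g a).IsHomogeneous (d a) :=
  (isHomogeneous_genF a).map _

lemma coeff_formOf (g : Cring k d →ₐ[k] S) (b : CoefIdx d) :
    coeff b.2.1 (formOf g b.1) = g (C (X b)) := by
  simp [formOf, coeff_map, coeff_genF]

lemma pointOf_formOf (g : Cring k d →ₐ[k] S) : pointOf d (formOf g) (fun s => g (X s)) = g := by
  ext b
  · simp [pointOf, coeff_formOf]
  · simp [pointOf]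

lemma formOf_pointOf {h : Fin 2 → MvPolynomial (Fin 4) S} (hh : ∀ a, (h a).IsHomogeneous (d a))
    (x : Fin 4 → S) : formOf (pointOf (k := k) d h x) = h := by
  ext a α
  by_cases hα : α.degree = d a
  · exact (coeff_formOf _ ⟨a, α, hα⟩).trans ((aevalTower_C _ _ _).trans (aeval_X _ _))
  · rw [(isHomogeneous_formOf _ a).coeff_eq_zero hα, (hh a).coeff_eq_zero hα]

lemma algHom_apply_eq_eval_map (g : Cring k d →ₐ[k] S) (p : Cring k d) :
    g p = eval (fun s => g (X s)) (map (g.toRingHom.comp C) p) := by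
  rw [eval_map]
  exact congrArg (· p) (ringHom_ext (f := g.toRingHom)
    (g := eval₂Hom (g.toRingHom.comp C) fun s => g (X s)) (by simp) (by simp))

lemma comp_pointOf (π : S →ₐ[k] T) (h : Fin 2 → MvPolynomial (Fin 4) S) (x : Fin 4 → S) :
    π.comp (pointOf d h x) = pointOf d (fun a => map π.toRingHom (h a)) (π ∘ x) := by
  ext b
  · simp [pointOf, coeff_map]
  · simp [pointOf]

lemma formOf_comp (π : S →ₐ[k] T) (g : Cring k d →ₐ[k] S) (a : Fin 2) :
    formOf (π.comp g) a = map π.toRingHom (formOf g a) := by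
  rw [formOf, formOf, map_map]
  rfl

lemma Dideal_le_ker_iff (g : Cring k d →ₐ[k] S) :
    Dideal k d ≤ RingHom.ker g ↔
      (∀ a, eval (fun s => g (X s)) (formOf g a) = 0) ∧
        ∀ r s, eval (fun s => g (X s)) (jacobianMinor (formOf g 0) (formOf g 1) r s) = 0 := by
  simp only [Dideal_le_iff, RingHom.mem_ker, formOf, ← map_jacobianMinor,
    ← algHom_apply_eq_eval_map]
  rfl

/-- The `S`-valued point `(h₁ ∘ M, h₂ ∘ M, y)` of `Spec C`, where `h₁, h₂` are the forms of `g`. -/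
noncomputable def linearChange (g : Cring k d →ₐ[k] S) (M : Matrix (Fin 4) (Fin 4) S)
    (y : Fin 4 → S) : Cring k d →ₐ[k] S :=
  pointOf d (fun a => bind₁ M.toMvPolynomial (formOf g a)) y

lemma linearChange_X (g : Cring k d →ₐ[k] S) (M : Matrix (Fin 4) (Fin 4) S) (y : Fin 4 → S)
    (s : Fin 4) : linearChange g M y (X s) = y s := by
  simp [linearChange, pointOf]

lemma formOf_linearChange (g : Cring k d →ₐ[k] S) (M : Matrix (Fin 4) (Fin 4) S)
    (y : Fin 4 → S) (a : Fin 2) :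
    formOf (linearChange g M y) a = bind₁ M.toMvPolynomial (formOf g a) := by
  rw [linearChange, formOf_pointOf]
  intro a
  simpa using (isHomogeneous_formOf g a).aeval _ M.toMvPolynomial_isHomogeneous

lemma linearChange_one (g : Cring k d →ₐ[k] S) : linearChange g 1 (fun s => g (X s)) = g := by
  simp [linearChange, Matrix.toMvPolynomial_one, bind₁_X_left, pointOf_formOf]

lemma comp_linearChange (π : S →ₐ[k] T) (g : Cring k d →ₐ[k] S)
    (M : Matrix (Fin 4) (Fin 4) S) (y : Fin 4 → S) :
    π.comp (linearChange g M y) = linearChange (π.comp g) (M.map π.toRingHom) (π ∘ y) := by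
  simp only [linearChange, comp_pointOf, formOf_comp, map_bind₁]
  congr! 4
  exact funext fun s => (Matrix.toMvPolynomial_map π.toRingHom M s).symm

lemma Dideal_le_ker_linearChange {g : Cring k d →ₐ[k] S} (hg : Dideal k d ≤ RingHom.ker g)
    {M : Matrix (Fin 4) (Fin 4) S} {y : Fin 4 → S} (hy : M.mulVec y = fun s => g (X s)) :
    Dideal k d ≤ RingHom.ker (linearChange g M y) := by
  rw [Dideal_le_ker_iff] at hg ⊢
  simp [linearChange_X, formOf_linearChange, jacobianMinor_bind₁, eval_bind₁,
    Matrix.toMvPolynomial_eval_eq_apply, hy, hg.1, hg.2]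

/-- The `S[t]`-valued point obtained from `g` by the change of coordinates `x_j ↦ x_j + t x_i`:
the transvection moves the point, and the forms are composed with its inverse, so that the values
of the forms at the point do not change. -/
noncomputable def shear (g : Cring k d →ₐ[k] S) (i j : Fin 4) : Cring k d →ₐ[k] Polynomial S :=
  linearChange (Polynomial.CAlgHom.comp g) (Matrix.transvection j i (-Polynomial.X))
    ((Matrix.transvection j i Polynomial.X).mulVec fun s => Polynomial.C (g (X s)))

lemma shear_X_self (g : Cring k d →ₐ[k] S) (i j : Fin 4) :
    shear g i j (X j) = Polynomial.C (g (X j)) + Polynomial.X * Polynomial.C (g (X i)) := by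
  simp [shear, linearChange_X, Matrix.transvection, Matrix.add_mulVec, Matrix.single_mulVec]

lemma aeval_zero_comp_shear (g : Cring k d →ₐ[k] S) (i j : Fin 4) :
    ((Polynomial.aeval (0 : S)).restrictScalars k).comp (shear g i j) = g := by
  set π : Polynomial S →ₐ[k] S := (Polynomial.aeval (0 : S)).restrictScalars k
  have hπC : π.comp (Polynomial.CAlgHom.comp g) = g := by ext <;> simp [π]
  have hX : π.toRingHom Polynomial.X = 0 := by simp [π]
  have hy : π ∘ ((Matrix.transvection j i Polynomial.X).mulVec fun s => Polynomial.C (g (X s))) =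
      fun s => g (X s) := funext fun s => by
    refine (RingHom.map_mulVec π.toRingHom _ _ s).trans ?_
    rw [map_transvection, hX, Matrix.transvection_zero, Matrix.one_mulVec]
    simp [π]
  rw [shear, comp_linearChange, hπC, map_transvection, map_neg, hX, neg_zero,
    Matrix.transvection_zero, hy, linearChange_one]

lemma Dideal_le_ker_shear {g : Cring k d →ₐ[k] S} (hg : Dideal k d ≤ RingHom.ker g)
    {i j : Fin 4} (hji : j ≠ i) : Dideal k d ≤ RingHom.ker (shear g i j) := by
  refine Dideal_le_ker_linearChange (fun q hq => ?_) ?_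
  · simpa using hg hq
  · simp [Matrix.transvection_mul_transvection_same _ _ hji]

theorem eq_zero_of_X_pow_mul_mem_Dideal {g : Cring k d →ₐ[k] S}
    (hg : Dideal k d ≤ RingHom.ker g) {i j : Fin 4} (hi : g (X i) ∈ nonZeroDivisors S) {ν : ℕ}
    {p : Cring k d} (hp : X j ^ ν * p ∈ Dideal k d) : g p = 0 := by
  rcases eq_or_ne j i with rfl | hji
  · refine (mul_left_mem_nonZeroDivisors_eq_zero_iff (pow_mem hi ν)).mp ?_
    simpa using hg hp
  have hreg : shear g i j (X j) ∈ nonZeroDivisors (Polynomial S) :=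
    Polynomial.mem_nonzeroDivisors_of_coeff_mem 1 (by simpa [shear_X_self] using hi)
  have hzero : shear g i j p = 0 := by
    refine (mul_left_mem_nonZeroDivisors_eq_zero_iff (pow_mem hreg ν)).mp ?_
    simpa using Dideal_le_ker_shear hg hji hp
  rw [← aeval_zero_comp_shear g i j, AlgHom.comp_apply, hzero, map_zero]

end Points

lemma exists_X_pow_mul_mem_Dideal {k : Type*} [CommRing k] {d : Fin 2 → ℕ} (i : Fin 4)
    {j : Fin 4} {ν : ℕ} {p : Cring k d} (hp : X j ^ ν * p ∈ Dideal k d) :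
    ∃ N : ℕ, X i ^ N * p ∈ Dideal k d := by
  let L := Localization.Away (Ideal.Quotient.mk (Dideal k d) (X i))
  let g : Cring k d →ₐ[k] L :=
    (IsScalarTower.toAlgHom k (Cring k d ⧸ Dideal k d) L).comp (Ideal.Quotient.mkₐ k (Dideal k d))
  have hg : Dideal k d ≤ RingHom.ker g := fun q hq => by
    simp [g, Ideal.Quotient.eq_zero_iff_mem.mpr hq]
  have hi : IsUnit (g (X i)) :=
    IsLocalization.Away.algebraMap_isUnit (Ideal.Quotient.mk (Dideal k d) (X i))
  exact (algebraMap_away_mk_eq_zero_iff _ _ _).mp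
    (eq_zero_of_X_pow_mul_mem_Dideal hg hi.mem_nonZeroDivisors hp)

theorem inertiaForms_eq_general (k : Type*) [CommRing k] (d : Fin 2 → ℕ) (i : Fin 4) :
    {p : Cring k d | ∃ ν : ℕ, ∀ q ∈ (mIdeal k d) ^ ν, q * p ∈ Dideal k d}
      = {p : Cring k d | ∃ ν : ℕ, (X i : Cring k d) ^ ν * p ∈ Dideal k d} ∧
    {p : Cring k d | ∃ ν : ℕ, ∀ q ∈ (mIdeal k d) ^ ν, q * p ∈ Dideal k d}
      = {p : Cring k d |
          (algebraMap (Cring k d ⧸ Dideal k d)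
              (Localization.Away (Ideal.Quotient.mk (Dideal k d) (X i : Cring k d))))
            (Ideal.Quotient.mk (Dideal k d) p) = 0} := by
  have saturation_iff (p : Cring k d) :
      (∃ ν : ℕ, ∀ q ∈ mIdeal k d ^ ν, q * p ∈ Dideal k d) ↔
        ∃ ν : ℕ, X i ^ ν * p ∈ Dideal k d := by
    rw [mIdeal, exists_span_pow_mul_mem_iff]
    exact ⟨fun h => h i, fun ⟨_, h⟩ j => exists_X_pow_mul_mem_Dideal j h⟩
  exact ⟨Set.ext saturation_iff, Set.ext fun p =>
    (saturation_iff p).trans (algebraMap_away_mk_eq_zero_iff _ _ _).symm⟩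

/-- **Corollary.** If `k` is a domain, then for each `i` the ideal of inertia forms
`T_𝔪(𝒟) = {p : ∃ ν, 𝔪^ν·p ⊆ 𝒟}` equals `{p : ∃ ν, x_i^ν·p ∈ 𝒟}`, and also equals the
kernel of the canonical map `C → B_{x_i}`. -/
theorem inertiaForms_eq (k : Type*) [CommRing k] [IsDomain k] (d : Fin 2 → ℕ)
    (hd : ∀ i, 0 < d i) (i : Fin 4) :
    {p : Cring k d | ∃ ν : ℕ, ∀ q ∈ (mIdeal k d) ^ ν, q * p ∈ Dideal k d}
      = {p : Cring k d | ∃ ν : ℕ, (X i : Cring k d) ^ ν * p ∈ Dideal k d} ∧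
    {p : Cring k d | ∃ ν : ℕ, ∀ q ∈ (mIdeal k d) ^ ν, q * p ∈ Dideal k d}
      = {p : Cring k d |
          (algebraMap (Cring k d ⧸ Dideal k d)
              (Localization.Away (Ideal.Quotient.mk (Dideal k d) (X i : Cring k d))))
            (Ideal.Quotient.mk (Dideal k d) p) = 0} :=
  inertiaForms_eq_general k d i
end
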